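/- For every ε ∈ (0, 1/4) there exist a constant C > 0 and a threshold n₀ such that for every integer n ≥ n₀, setting M = n^{1−2ε}, one has ∑_{i prime, M ≤ i ≤ n − n^{1−ε}} C(n−i)²/i ≤ C. -/

import Mathlib

open Real

open scoped Classical

/-- The singular series `C(n) = ∏_{p ∤ n} (1 - 1/(p-1)²) · ∏_{p ∣ n} (1 + 1/(p-1))`,
where both products run over primes. -/
noncomputable def singularSeries (n : ℕ) : ℝ :=
  (∏' p : {p : ℕ // p.Prime ∧ ¬ p ∣ n}, (1 - 1 / ((p : ℕ) - 1 : ℝ) ^ 2)) *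
    ∏ p ∈ n.primeFactors, (1 + 1 / ((p : ℝ) - 1))

/-!
Since the infinite product lies in `[0, 1]`, `C(m)² ≤ ∏_{p ∣ m} (1 + 6/p)`. An integer `m ≤ n` has
`O(log n)` prime factors, so those exceeding `w ≍ log n` contribute a bounded factor, and the rest
of the product expands as `∑ ∏_{p ∣ d} 6/p` over the `d ∣ m` dividing the primorial of `w`. All
these `d` are at most a small power of `n`. Exchanging the sums over `i` and `d` leaves
`∑ 1/i` over the primes `i ≡ n` modulo `d`, where `n^δ ≤ i < n`, for which Selberg's sieve with the
weights `1/i` gives a Brun–Titchmarsh bound `≪ σ₋₁(d)/d` even when `d` and `n` are not coprime.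
What remains is `∑_d σ₋₁(d)/d ∏_{p ∣ d} 6/p`, a partial Euler product dominated by
`∏_p (1 + 12/p²)`.
-/

section DivisorSums

open Finset

theorem sum_Icc_inv_sq_le_two (n : ℕ) : ∑ b ∈ Icc 1 n, ((b : ℝ) ^ 2)⁻¹ ≤ 2 := by
  have hIoo : Ioo 0 (n + 1) = Icc 1 n := by
    ext
    simp only [mem_Ioo, mem_Icc]
    lia
  simpa [hIoo] using sum_Ioo_inv_sq_le (α := ℝ) 0 (n + 1)

theorem sum_divisors_prod_primeFactors {R : Type*} [CommSemiring R] {n : ℕ} (hn : Squarefree n)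
    (f : ℕ → R) :
    ∑ d ∈ n.divisors, ∏ p ∈ d.primeFactors, f p = ∏ p ∈ n.primeFactors, (1 + f p) := by
  have hmul := ArithmeticFunction.IsMultiplicative.prodPrimeFactors f
  calc ∑ d ∈ n.divisors, ∏ p ∈ d.primeFactors, f p
      = ∑ d ∈ n.divisors, ArithmeticFunction.prodPrimeFactors f d :=
        sum_congr rfl fun d hd =>
          (ArithmeticFunction.prodPrimeFactors_apply (Nat.pos_of_mem_divisors hd).ne').symm
    _ = ∏ p ∈ n.primeFactors, (1 + ArithmeticFunction.prodPrimeFactors f p) :=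
        (hmul.prodPrimeFactors_one_add_of_squarefree hn).symm
    _ = ∏ p ∈ n.primeFactors, (1 + f p) := by
        refine prod_congr rfl fun p hp => ?_
        have hp' := Nat.prime_of_mem_primeFactors hp
        rw [ArithmeticFunction.prodPrimeFactors_apply hp'.ne_zero, hp'.primeFactors, prod_singleton]

/-- `σ₋₁(k)`, the sum of the reciprocals of the divisors of `k`. -/
noncomputable def sumInvDivisors (k : ℕ) : ℝ := ∑ e ∈ k.divisors, (e : ℝ)⁻¹

theorem sumInvDivisors_nonneg (k : ℕ) : 0 ≤ sumInvDivisors k :=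
  sum_nonneg fun _ _ => by positivity

theorem one_le_sumInvDivisors {k : ℕ} (hk : k ≠ 0) : 1 ≤ sumInvDivisors k := by
  have h := single_le_sum (f := fun e : ℕ => (e : ℝ)⁻¹) (fun _ _ => by positivity)
    (Nat.one_mem_divisors.2 hk)
  simpa [sumInvDivisors] using h

theorem sumInvDivisors_of_squarefree {k : ℕ} (hk : Squarefree k) :
    sumInvDivisors k = ∏ p ∈ k.primeFactors, (1 + (p : ℝ)⁻¹) := by
  rw [sumInvDivisors, ← sum_divisors_prod_primeFactors hk]
  refine sum_congr rfl fun d hd => ?_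
  rw [prod_inv_distrib, ← Nat.cast_prod, Nat.prod_primeFactors_of_squarefree
    (hk.squarefree_of_dvd (Nat.dvd_of_mem_divisors hd))]

theorem prod_primeFactors_mul_sumInvDivisors_div_le {d : ℕ} (hd : Squarefree d) {κ : ℝ}
    (hκ : 0 ≤ κ) :
    (∏ p ∈ d.primeFactors, κ / (p : ℝ)) * (sumInvDivisors d / d) ≤
      ∏ p ∈ d.primeFactors, 2 * κ * ((p : ℝ) ^ 2)⁻¹ := by
  have hcast : (d : ℝ) = ∏ p ∈ d.primeFactors, (p : ℝ) := by
    rw [← Nat.cast_prod, Nat.prod_primeFactors_of_squarefree hd]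
  rw [sumInvDivisors_of_squarefree hd, hcast, ← prod_div_distrib, ← prod_mul_distrib]
  refine prod_le_prod (fun p _ => by positivity) fun p hp => ?_
  have hp1 : (1 : ℝ) ≤ p := mod_cast (Nat.prime_of_mem_primeFactors hp).one_le
  calc κ / p * ((1 + (p : ℝ)⁻¹) / p) ≤ κ / p * ((1 + 1) / p) := by
        gcongr
        exact inv_le_one_of_one_le₀ hp1
    _ = 2 * κ * ((p : ℝ) ^ 2)⁻¹ := by ring

theorem sum_divisors_prod_mul_sumInvDivisors_div_le {P : ℕ} (hP : Squarefree P) {κ : ℝ}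
    (hκ : 0 ≤ κ) :
    ∑ d ∈ P.divisors, (∏ p ∈ d.primeFactors, κ / (p : ℝ)) * (sumInvDivisors d / d) ≤
      Real.exp (4 * κ) := by
  have hsub : P.primeFactors ⊆ Icc 1 P := fun p hp =>
    mem_Icc.2 ⟨(Nat.prime_of_mem_primeFactors hp).one_le, Nat.le_of_mem_primeFactors hp⟩
  calc ∑ d ∈ P.divisors, (∏ p ∈ d.primeFactors, κ / (p : ℝ)) * (sumInvDivisors d / d)
      ≤ ∑ d ∈ P.divisors, ∏ p ∈ d.primeFactors, 2 * κ * ((p : ℝ) ^ 2)⁻¹ :=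
        sum_le_sum fun d hd => prod_primeFactors_mul_sumInvDivisors_div_le
          (hP.squarefree_of_dvd (Nat.dvd_of_mem_divisors hd)) hκ
    _ = ∏ p ∈ P.primeFactors, (1 + 2 * κ * ((p : ℝ) ^ 2)⁻¹) :=
        sum_divisors_prod_primeFactors hP _
    _ ≤ Real.exp (∑ p ∈ P.primeFactors, 2 * κ * ((p : ℝ) ^ 2)⁻¹) :=
        Real.prod_one_add_le_exp_sum _ fun p => by positivity
    _ ≤ Real.exp (2 * κ * ∑ p ∈ Icc 1 P, ((p : ℝ) ^ 2)⁻¹) := by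
        rw [← mul_sum]
        gcongr
    _ ≤ Real.exp (4 * κ) := by
        rw [Real.exp_le_exp]
        calc _ ≤ 2 * κ * 2 := by
              gcongr
              exact sum_Icc_inv_sq_le_two P
          _ = 4 * κ := by ring

end DivisorSums

section MoebiusSums

open Finset
open scoped ArithmeticFunction.Moebius

theorem sum_moebius_filter_dvd_divisors {l m : ℕ} (hm : Squarefree m) (hl : l ∣ m) :
    ∑ d ∈ m.divisors with l ∣ d, μ d = if l = m then μ l else 0 := by
  obtain ⟨r, rfl⟩ := hl
  have hl0 : l ≠ 0 := left_ne_zero_of_mul hm.ne_zero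
  have hr0 : r ≠ 0 := right_ne_zero_of_mul hm.ne_zero
  have hcop : l.Coprime r := Nat.coprime_of_squarefree_mul hm
  have hfilter : {d ∈ (l * r).divisors | l ∣ d} = r.divisors.image (l * ·) := by
    ext d
    simp only [mem_filter, Nat.mem_divisors, mem_image]
    constructor
    · rintro ⟨⟨hd, -⟩, e, rfl⟩
      exact ⟨e, ⟨Nat.dvd_of_mul_dvd_mul_left (Nat.pos_of_ne_zero hl0) hd, hr0⟩, rfl⟩
    · rintro ⟨e, ⟨he, -⟩, rfl⟩
      exact ⟨⟨mul_dvd_mul_left l he, hm.ne_zero⟩, dvd_mul_right l e⟩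
  calc ∑ d ∈ (l * r).divisors with l ∣ d, μ d
      = ∑ e ∈ r.divisors, μ (l * e) := by
        rw [hfilter, sum_image (mul_right_injective₀ hl0).injOn]
    _ = μ l * ∑ e ∈ r.divisors, μ e := by
        rw [mul_sum]
        refine sum_congr rfl fun e he => ?_
        exact ArithmeticFunction.isMultiplicative_moebius.map_mul_of_coprime
          (hcop.coprime_dvd_right (Nat.dvd_of_mem_divisors he))
    _ = if l = l * r then μ l else 0 := by
        rw [← ArithmeticFunction.coe_mul_zeta_apply, ArithmeticFunction.moebius_mul_coe_zeta,
          ArithmeticFunction.one_apply, mul_ite, mul_one, mul_zero]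
        simp only [left_eq_mul₀ hl0]

theorem sum_moebius_filter_dvd_dvd {P l m : ℕ} (hP : Squarefree P) (hm : m ∣ P) :
    ∑ d ∈ P.divisors with l ∣ d ∧ d ∣ m, μ d = if l = m then μ l else 0 := by
  simp_rw [and_comm (a := l ∣ _), ← filter_filter, Nat.divisors_filter_dvd_of_dvd hP.ne_zero hm]
  by_cases hlm : l ∣ m
  · exact sum_moebius_filter_dvd_divisors (hP.squarefree_of_dvd hm) hlm
  · rw [filter_false_of_mem fun d hd h => hlm (h.trans (Nat.dvd_of_mem_divisors hd)), sum_empty,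
      if_neg fun h => hlm h.dvd]

end MoebiusSums

section BoundingSieve

open Finset BoundingSieve

variable (s : BoundingSieve)

theorem nu_le_selbergTerms {d : ℕ} (hd : d ∣ s.prodPrimes) : s.nu d ≤ s.selbergTerms d := by
  rw [selbergTerms_apply]
  refine le_mul_of_one_le_right (nu_pos_of_dvd_prodPrimes hd).le
    (one_le_prod fun p hp => ?_)
  have hp' := Nat.prime_of_mem_primeFactors hp
  have hdvd := (Nat.dvd_of_mem_primeFactors hp).trans hd
  have h0 := s.nu_pos_of_prime p hp' hdvd
  have h1 := s.nu_lt_one_of_prime p hp' hdvd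
  exact (one_le_inv₀ (by linarith)).2 (by linarith)

theorem errSum_lambdaSquared_le {B : ℝ} (hB : ∀ d, d ∣ s.prodPrimes → |s.rem d| ≤ B)
    (w : ℕ → ℝ) :
    s.errSum (lambdaSquared w) ≤ B * (∑ d ∈ s.prodPrimes.divisors, |w d|) ^ 2 := by
  set P := s.prodPrimes
  have hP : P ≠ 0 := prodPrimes_ne_zero
  have hlambda (d : ℕ) (hd : d ∈ P.divisors) : |lambdaSquared w d| ≤
      ∑ e ∈ P.divisors, ∑ f ∈ P.divisors, if d = e.lcm f then |w e| * |w f| else 0 := by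
    have hsub : d.divisors ⊆ P.divisors :=
      Nat.divisors_subset_of_dvd hP (Nat.dvd_of_mem_divisors hd)
    have h0 (e f : ℕ) : 0 ≤ if d = e.lcm f then |w e| * |w f| else 0 := by positivity
    calc |lambdaSquared w d|
        ≤ ∑ e ∈ d.divisors, ∑ f ∈ d.divisors, if d = e.lcm f then |w e| * |w f| else 0 := by
          refine (abs_sum_le_sum_abs _ _).trans (sum_le_sum fun e _ => ?_)
          refine (abs_sum_le_sum_abs _ _).trans (sum_le_sum fun f _ => ?_)
          split_ifs <;> simp [abs_mul]
      _ ≤ ∑ e ∈ P.divisors, ∑ f ∈ d.divisors, if d = e.lcm f then |w e| * |w f| else 0 :=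
          sum_le_sum_of_subset_of_nonneg hsub fun e _ _ => sum_nonneg fun f _ => h0 e f
      _ ≤ _ := sum_le_sum fun e _ => sum_le_sum_of_subset_of_nonneg hsub fun f _ _ => h0 e f
  calc s.errSum (lambdaSquared w)
      ≤ ∑ d ∈ P.divisors,
          (∑ e ∈ P.divisors, ∑ f ∈ P.divisors, if d = e.lcm f then |w e| * |w f| else 0) * B :=
        sum_le_sum fun d hd => mul_le_mul (hlambda d hd) (hB d (Nat.dvd_of_mem_divisors hd))
          (abs_nonneg _) ((abs_nonneg _).trans (hlambda d hd))
    _ = (∑ e ∈ P.divisors, ∑ f ∈ P.divisors, |w e| * |w f|) * B := by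
        rw [← sum_mul, sum_comm]
        congr 1
        refine sum_congr rfl fun e he => ?_
        rw [sum_comm]
        refine sum_congr rfl fun f hf => ?_
        rw [sum_ite_eq_of_mem']
        exact Nat.mem_divisors.2 ⟨Nat.lcm_dvd (Nat.dvd_of_mem_divisors he)
          (Nat.dvd_of_mem_divisors hf), hP⟩
    _ = B * (∑ d ∈ P.divisors, |w d|) ^ 2 := by rw [sq, sum_mul_sum, mul_comm]

end BoundingSieve

section SelbergSieve

open Finset BoundingSieve
open scoped ArithmeticFunction.Moebius

/-- The moduli `d ∣ P` at which Selberg's weights may be nonzero. -/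
noncomputable def sieveModuli (s : SelbergSieve) : Finset ℕ :=
  s.prodPrimes.divisors.filter fun d : ℕ => (d : ℝ) ^ 2 ≤ s.level

/-- The sum `S = ∑ g(l)` over the sieve moduli, whose reciprocal is the main term of Selberg's
sieve. -/
noncomputable def selbergBoundingSum (s : SelbergSieve) : ℝ :=
  ∑ l ∈ sieveModuli s, s.selbergTerms l

/-- Selberg's weights: the minimiser, among weights supported on the sieve moduli with value `1`
at `1`, of the quadratic form `mainSum (lambdaSquared w)`. -/
noncomputable def selbergWeight (s : SelbergSieve) (d : ℕ) : ℝ :=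
  μ d / (s.nu d * selbergBoundingSum s) *
    ∑ l ∈ sieveModuli s with d ∣ l, s.selbergTerms l

theorem mem_sieveModuli {s : SelbergSieve} {d : ℕ} :
    d ∈ sieveModuli s ↔ d ∣ s.prodPrimes ∧ (d : ℝ) ^ 2 ≤ s.level := by
  rw [sieveModuli, mem_filter, Nat.mem_divisors, and_iff_left prodPrimes_ne_zero]

variable (s : SelbergSieve)

theorem one_mem_sieveModuli : 1 ∈ sieveModuli s := by
  simpa [mem_sieveModuli] using s.one_le_level

theorem mem_sieveModuli_of_dvd {d l : ℕ} (hl : l ∈ sieveModuli s) (hd : d ∣ l) :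
    d ∈ sieveModuli s := by
  rw [mem_sieveModuli] at hl ⊢
  have hl0 : 0 < l := (Nat.pos_of_dvd_of_pos hl.1 (Nat.pos_of_ne_zero prodPrimes_ne_zero))
  have hdl : (d : ℝ) ≤ l := mod_cast Nat.le_of_dvd hl0 hd
  exact ⟨hd.trans hl.1, (by gcongr : (d : ℝ) ^ 2 ≤ (l : ℝ) ^ 2).trans hl.2⟩

theorem selbergTerms_pos_of_mem_sieveModuli {l : ℕ} (hl : l ∈ sieveModuli s) :
    0 < s.selbergTerms l :=
  selbergTerms_pos (mem_sieveModuli.1 hl).1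

theorem selbergBoundingSum_pos : 0 < selbergBoundingSum s :=
  sum_pos (fun _ => selbergTerms_pos_of_mem_sieveModuli s) ⟨1, one_mem_sieveModuli s⟩

theorem selbergWeight_one : selbergWeight s 1 = 1 := by
  have hS := (selbergBoundingSum_pos s).ne'
  simp only [selbergWeight, ArithmeticFunction.moebius_apply_one, Int.cast_one,
    s.nu_mult.map_one, one_mul, one_dvd, filter_true]
  exact one_div_mul_cancel hS

theorem selbergWeight_eq_zero {d : ℕ} (hd : d ∉ sieveModuli s) : selbergWeight s d = 0 := by
  rw [selbergWeight, filter_false_of_mem fun l hl hdl => hd (mem_sieveModuli_of_dvd s hl hdl),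
    sum_empty, mul_zero]

theorem abs_selbergWeight_le {d : ℕ} (hd : d ∣ s.prodPrimes) :
    |selbergWeight s d| ≤ (s.nu d)⁻¹ := by
  have hS := selbergBoundingSum_pos s
  have hν : 0 < s.nu d := nu_pos_of_dvd_prodPrimes hd
  have hμ : |(μ d : ℝ)| ≤ 1 := mod_cast ArithmeticFunction.abs_moebius_le_one
  set T := ∑ l ∈ sieveModuli s with d ∣ l, s.selbergTerms l with hT
  have hg (l : ℕ) (hl : l ∈ sieveModuli s) : 0 ≤ s.selbergTerms l :=
    (selbergTerms_pos_of_mem_sieveModuli s hl).le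
  have hT0 : 0 ≤ T := sum_nonneg fun l hl => hg l (mem_of_mem_filter l hl)
  have hTS : T ≤ selbergBoundingSum s :=
    sum_le_sum_of_subset_of_nonneg (filter_subset _ _) fun l hl _ => hg l hl
  calc |selbergWeight s d|
      = |(μ d : ℝ)| * (T / (s.nu d * selbergBoundingSum s)) := by
        rw [selbergWeight, ← hT, div_mul_eq_mul_div, abs_div, abs_mul, abs_of_nonneg hT0,
          abs_of_pos (mul_pos hν hS), mul_div_assoc]
    _ ≤ 1 * (selbergBoundingSum s / (s.nu d * selbergBoundingSum s)) := by gcongr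
    _ = (s.nu d)⁻¹ := by field_simp

theorem sum_nu_mul_selbergWeight (l : ℕ) :
    ∑ d ∈ s.prodPrimes.divisors with l ∣ d, s.nu d * selbergWeight s d =
      if l ∈ sieveModuli s then μ l * s.selbergTerms l / selbergBoundingSum s else 0 := by
  set P := s.prodPrimes
  set S := selbergBoundingSum s
  have hweight (d : ℕ) (hd : d ∈ P.divisors) : s.nu d * selbergWeight s d =
      S⁻¹ * ∑ m ∈ sieveModuli s with d ∣ m, μ d * s.selbergTerms m := by
    have hν : s.nu d ≠ 0 := nu_ne_zero (Nat.dvd_of_mem_divisors hd)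
    rw [selbergWeight, ← mul_sum]
    field_simp
    rfl
  calc ∑ d ∈ P.divisors with l ∣ d, s.nu d * selbergWeight s d
      = S⁻¹ * ∑ d ∈ P.divisors with l ∣ d,
          ∑ m ∈ sieveModuli s with d ∣ m, μ d * s.selbergTerms m := by
        rw [mul_sum]
        exact sum_congr rfl fun d hd => hweight d (mem_of_mem_filter d hd)
    _ = S⁻¹ * ∑ m ∈ sieveModuli s,
          (∑ d ∈ P.divisors with l ∣ d ∧ d ∣ m, (μ d : ℝ)) * s.selbergTerms m := by
        simp_rw [sum_mul]
        congr 1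
        refine sum_comm' fun d m => ?_
        simp only [mem_filter]
        tauto
    _ = S⁻¹ * ∑ m ∈ sieveModuli s, if l = m then μ l * s.selbergTerms m else 0 := by
        congr 1
        refine sum_congr rfl fun m hm => ?_
        rw [← ite_zero_mul, ← Int.cast_sum, sum_moebius_filter_dvd_dvd s.prodPrimes_squarefree
          (mem_sieveModuli.1 hm).1, Int.cast_ite, Int.cast_zero]
    _ = if l ∈ sieveModuli s then μ l * s.selbergTerms l / S else 0 := by
        rw [sum_ite_eq, mul_ite, mul_zero, inv_mul_eq_div]

-- In the variables `y l = ∑_{l ∣ d} ν(d) w(d)` the main sum is the diagonal form `∑ (y l)² / g(l)`,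
-- and Selberg's weights make `y l` proportional to `μ(l) g(l)`.
theorem mainSum_lambdaSquared_selbergWeight :
    s.mainSum (lambdaSquared (selbergWeight s)) = (selbergBoundingSum s)⁻¹ := by
  have hS := (selbergBoundingSum_pos s).ne'
  rw [mainSum_lambdaSquared_eq_sum_mul_sum_sq]
  calc ∑ l ∈ s.prodPrimes.divisors, (s.selbergTerms l)⁻¹ *
        (∑ d ∈ s.prodPrimes.divisors, if l ∣ d then s.nu d * selbergWeight s d else 0) ^ 2
      = ∑ l ∈ s.prodPrimes.divisors,
          if l ∈ sieveModuli s then s.selbergTerms l / selbergBoundingSum s ^ 2 else 0 := by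
        refine sum_congr rfl fun l hl => ?_
        have hlP := Nat.dvd_of_mem_divisors hl
        have hg := (selbergTerms_pos hlP).ne'
        have hμ : (μ l : ℝ) ^ 2 = 1 := mod_cast
          ArithmeticFunction.moebius_sq_eq_one_of_squarefree (squarefree_of_dvd_prodPrimes hlP)
        rw [← sum_filter, sum_nu_mul_selbergWeight]
        split_ifs
        · rw [div_pow, mul_pow, hμ]
          field_simp
        · ring
    _ = selbergBoundingSum s / selbergBoundingSum s ^ 2 := by
        rw [sum_ite_mem, sieveModuli, inter_eq_right.2 (filter_subset _ _), ← sieveModuli,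
          ← sum_div, ← selbergBoundingSum]
    _ = (selbergBoundingSum s)⁻¹ := by field_simp

theorem siftedSum_le_selberg {B : ℝ} (hB : ∀ d, d ∣ s.prodPrimes → |s.rem d| ≤ B) :
    s.siftedSum ≤ s.totalMass / selbergBoundingSum s +
      B * (∑ d ∈ sieveModuli s, (s.nu d)⁻¹) ^ 2 := by
  have hB0 : 0 ≤ B := (abs_nonneg _).trans (hB 1 (one_dvd _))
  have hweights : ∑ d ∈ s.prodPrimes.divisors, |selbergWeight s d| ≤
      ∑ d ∈ sieveModuli s, (s.nu d)⁻¹ := by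
    rw [sieveModuli, sum_filter]
    refine sum_le_sum fun d hd => ?_
    have hdP := Nat.dvd_of_mem_divisors hd
    split_ifs with h
    · exact abs_selbergWeight_le s hdP
    · rw [selbergWeight_eq_zero s fun hmem => h (mem_sieveModuli.1 hmem).2, abs_zero]
  calc s.siftedSum
      ≤ s.totalMass * s.mainSum (lambdaSquared (selbergWeight s)) +
          s.errSum (lambdaSquared (selbergWeight s)) :=
        siftedSum_le_mainSum_errSum_of_upperMoebius _
          (upperMoebius_lambdaSquared _ (selbergWeight_one s))
    _ ≤ s.totalMass / selbergBoundingSum s +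
          B * (∑ d ∈ s.prodPrimes.divisors, |selbergWeight s d|) ^ 2 := by
        rw [mainSum_lambdaSquared_selbergWeight, ← div_eq_mul_inv]
        gcongr
        exact errSum_lambdaSquared_le s.toBoundingSieve hB _
    _ ≤ _ := by gcongr

end SelbergSieve

section Progressions

open Finset

theorem abs_card_filter_Ico_modEq_sub_le {a b r : ℕ} (hab : a ≤ b) (hr : 0 < r) (v : ℕ) :
    |(#{i ∈ Ico a b | i ≡ v [MOD r]} : ℝ) - ((b : ℝ) - a) / r| ≤ 1 := by
  suffices h : |(#{i ∈ Ico a b | i ≡ v [MOD r]} : ℚ) - ((b : ℚ) - a) / r| ≤ 1 by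
    have hcast := (Rat.cast_le (K := ℝ)).2 h
    push_cast at hcast
    exact hcast
  have hle : ((a : ℚ) - v) / r ≤ ((b : ℚ) - v) / r := by gcongr
  have hcard : (#{i ∈ Ico a b | i ≡ v [MOD r]} : ℚ) =
      (⌈((b : ℚ) - v) / r⌉ : ℚ) - ⌈((a : ℚ) - v) / r⌉ := by
    have h := Nat.Ico_filter_modEq_card (a := a) (b := b) hr v
    rw [max_eq_left (sub_nonneg.2 (Int.ceil_mono hle))] at h
    exact_mod_cast h
  have hsplit : ((b : ℚ) - a) / r = ((b : ℚ) - v) / r - ((a : ℚ) - v) / r := by ring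
  have ha := Int.ceil_lt_add_one (((a : ℚ) - v) / r)
  have hb := Int.ceil_lt_add_one (((b : ℚ) - v) / r)
  rw [hcard, hsplit, abs_le]
  constructor <;> linarith [Int.le_ceil (((a : ℚ) - v) / r), Int.le_ceil (((b : ℚ) - v) / r)]

theorem abs_sum_Ico_mul_le_of_antitoneOn {f c : ℕ → ℝ} {a : ℕ} {B : ℝ} (hf : ∀ i, 0 ≤ f i)
    (hanti : AntitoneOn f (Set.Ici a)) (hB : ∀ m, |∑ i ∈ Ico a m, c i| ≤ B) (b : ℕ) :
    |∑ i ∈ Ico a b, c i * f i| ≤ B * f a := by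
  have hB0 : 0 ≤ B := (abs_nonneg _).trans (hB a)
  obtain hba | hab := lt_or_ge b a
  · rw [Ico_eq_empty_of_le hba.le, sum_empty, abs_zero]
    exact mul_nonneg hB0 (hf a)
  -- Abel summation, as an induction on the upper end of the range.
  have hparts : |∑ i ∈ Ico a b, c i * f i - (∑ i ∈ Ico a b, c i) * f b| ≤ B * (f a - f b) := by
    induction b, hab using Nat.le_induction with
    | base => simp
    | succ b hab ih =>
      have hstep : 0 ≤ f b - f (b + 1) :=
        sub_nonneg.2 (hanti hab (Set.mem_Ici.2 (by lia)) b.le_succ)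
      calc |∑ i ∈ Ico a (b + 1), c i * f i - (∑ i ∈ Ico a (b + 1), c i) * f (b + 1)|
          = |(∑ i ∈ Ico a b, c i * f i - (∑ i ∈ Ico a b, c i) * f b) +
              (∑ i ∈ Ico a (b + 1), c i) * (f b - f (b + 1))| := by
            rw [sum_Ico_succ_top hab, sum_Ico_succ_top hab]
            ring_nf
        _ ≤ B * (f a - f b) + B * (f b - f (b + 1)) := by
            refine (abs_add_le _ _).trans (add_le_add ih ?_)
            rw [abs_mul, abs_of_nonneg hstep]
            exact mul_le_mul_of_nonneg_right (hB _) hstep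
        _ = B * (f a - f (b + 1)) := by ring
  have hboundary : |(∑ i ∈ Ico a b, c i) * f b| ≤ B * f b := by
    rw [abs_mul, abs_of_nonneg (hf b)]
    exact mul_le_mul_of_nonneg_right (hB b) (hf b)
  calc |∑ i ∈ Ico a b, c i * f i| ≤ B * (f a - f b) + B * f b := by
        rw [← sub_add_cancel (∑ i ∈ Ico a b, c i * f i) ((∑ i ∈ Ico a b, c i) * f b)]
        exact (abs_add_le _ _).trans (add_le_add hparts hboundary)
    _ = B * f a := by ring

theorem abs_sum_filter_Ico_modEq_sub_le {f : ℕ → ℝ} {a r : ℕ} (hf : ∀ i, 0 ≤ f i)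
    (hanti : AntitoneOn f (Set.Ici a)) (hr : 0 < r) (b v : ℕ) :
    |∑ i ∈ Ico a b with i ≡ v [MOD r], f i - (∑ i ∈ Ico a b, f i) / r| ≤ f a := by
  have hcount (m : ℕ) :
      |∑ i ∈ Ico a m, ((if i ≡ v [MOD r] then 1 else 0) - (r : ℝ)⁻¹)| ≤ 1 := by
    obtain hma | ham := lt_or_ge m a
    · simp [Ico_eq_empty_of_le hma.le]
    · have h := abs_card_filter_Ico_modEq_sub_le ham hr v
      simpa only [sum_sub_distrib, sum_boole, sum_const, Nat.card_Ico, nsmul_eq_mul,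
        Nat.cast_sub ham, div_eq_mul_inv] using h
  have h := abs_sum_Ico_mul_le_of_antitoneOn hf hanti hcount b
  simpa only [sub_mul, ite_mul, one_mul, zero_mul, sum_sub_distrib, ← sum_filter, inv_mul_eq_div,
    ← sum_div] using h

theorem filter_modEq_filter_dvd_eq {d k : ℕ} (hdk : d.Coprime k) (v : ℕ) (s : Finset ℕ) :
    ∃ u, {i ∈ s | i ≡ v [MOD k] ∧ d ∣ i} = {i ∈ s | i ≡ u [MOD k * d]} := by
  obtain ⟨u, huv, hu0⟩ := Nat.chineseRemainder hdk.symm v 0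
  refine ⟨u, filter_congr fun i _ => ?_⟩
  rw [← Nat.modEq_and_modEq_iff_modEq_mul hdk.symm, ← Nat.modEq_zero_iff_dvd]
  exact and_congr ⟨fun h => h.trans huv.symm, fun h => h.trans huv⟩
    ⟨fun h => h.trans hu0.symm, fun h => h.trans hu0⟩

end Progressions

section Primorial

open Finset

theorem exists_squarefree_coprime_primorial_dvd_mul (k Q : ℕ) :
    ∃ P, Squarefree P ∧ P.Coprime k ∧ P ∣ primorial Q ∧ primorial Q ∣ k * P := by
  have hmul : (primorial Q).gcd k * (primorial Q / (primorial Q).gcd k) = primorial Q :=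
    Nat.mul_div_cancel' (Nat.gcd_dvd_left _ _)
  have hdvd : primorial Q / (primorial Q).gcd k ∣ primorial Q :=
    Nat.div_dvd_of_dvd (Nat.gcd_dvd_left _ _)
  have hcop := Nat.coprime_of_squarefree_mul (hmul.symm ▸ squarefree_primorial Q)
  refine ⟨_, (squarefree_primorial Q).squarefree_of_dvd hdvd, ?_, hdvd, ?_⟩
  · refine Nat.coprime_of_dvd fun p hp hpP hpk => hp.one_lt.ne' ?_
    exact Nat.eq_one_of_dvd_coprimes hcop (Nat.dvd_gcd (hpP.trans hdvd) hpk) hpP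
  · exact hmul.symm.dvd.trans (mul_dvd_mul_right (Nat.gcd_dvd_right _ _) _)

theorem exists_sq_mul_dvd_mul_dvd {k P Q n : ℕ} (hkP : primorial Q ∣ k * P) (hn : n ∈ Icc 1 Q) :
    ∃ b ∈ Icc 1 Q, ∃ e d, e ∣ k ∧ d ∣ P ∧ d ≤ Q ∧ b ^ 2 * (e * d) = n := by
  obtain ⟨hn1, hnQ⟩ := mem_Icc.1 hn
  obtain ⟨m, b, rfl, hm⟩ := Nat.sq_mul_squarefree n
  have hm0 : 0 < m := Nat.pos_of_ne_zero hm.ne_zero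
  have hb0 : 0 < b := Nat.pos_of_ne_zero (by rintro rfl; simp at hn1)
  have hmQ : m ≤ Q := (Nat.le_mul_of_pos_left m (by positivity)).trans hnQ
  have hbQ : b ≤ Q :=
    (Nat.le_self_pow two_ne_zero b).trans ((Nat.le_mul_of_pos_right _ hm0).trans hnQ)
  obtain ⟨e, d, he, hd, rfl⟩ := exists_dvd_and_dvd_of_dvd_mul
    ((hm.dvd_primorial.trans (primorial_dvd_primorial hmQ)).trans hkP)
  exact ⟨b, mem_Icc.2 ⟨hb0, hbQ⟩, e, d, he, hd,
    (Nat.le_mul_of_pos_left d (Nat.pos_of_mul_pos_right hm0)).trans hmQ, rfl⟩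

theorem log_add_one_le_mul_sum_inv {k P Q : ℕ} (hk : k ≠ 0) (hP : P ≠ 0)
    (hkP : primorial Q ∣ k * P) :
    Real.log (Q + 1) ≤ 2 * sumInvDivisors k * ∑ d ∈ P.divisors with d ≤ Q, (d : ℝ)⁻¹ := by
  let T : Finset (ℕ × ℕ × ℕ) := Icc 1 Q ×ˢ k.divisors ×ˢ {d ∈ P.divisors | d ≤ Q}
  let g : ℕ × ℕ × ℕ → ℕ := fun t => t.1 ^ 2 * (t.2.1 * t.2.2)
  have hcover : Icc 1 Q ⊆ T.image g := by
    intro n hn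
    obtain ⟨b, hb, e, d, he, hd, hdQ, rfl⟩ := exists_sq_mul_dvd_mul_dvd hkP hn
    refine mem_image.2 ⟨(b, e, d), ?_, rfl⟩
    simp only [T, mem_product, mem_filter, Nat.mem_divisors]
    exact ⟨hb, ⟨he, hk⟩, ⟨hd, hP⟩, hdQ⟩
  calc Real.log (Q + 1)
      ≤ ∑ n ∈ Icc 1 Q, (n : ℝ)⁻¹ := by
        simpa [harmonic_eq_sum_Icc] using log_add_one_le_harmonic Q
    _ ≤ ∑ n ∈ T.image g, (n : ℝ)⁻¹ :=
        sum_le_sum_of_subset_of_nonneg hcover fun _ _ _ => by positivity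
    _ ≤ ∑ t ∈ T, (g t : ℝ)⁻¹ :=
        sum_image_le_of_nonneg fun _ _ => by positivity
    _ = (∑ b ∈ Icc 1 Q, ((b : ℝ) ^ 2)⁻¹) *
          (sumInvDivisors k * ∑ d ∈ P.divisors with d ≤ Q, (d : ℝ)⁻¹) := by
        rw [sumInvDivisors, sum_mul_sum, ← sum_product', sum_mul_sum, ← sum_product']
        exact sum_congr rfl fun t _ => by simp only [g, Nat.cast_mul, Nat.cast_pow, mul_inv]
    _ ≤ 2 * (sumInvDivisors k * ∑ d ∈ P.divisors with d ≤ Q, (d : ℝ)⁻¹) := by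
        have := sumInvDivisors_nonneg k
        gcongr
        exact sum_Icc_inv_sq_le_two Q
    _ = _ := (mul_assoc _ _ _).symm

theorem cast_le_exp_of_dvd_primorial {d : ℕ} {y : ℝ} (hy : 0 ≤ y)
    (hd : d ∣ primorial ⌊y⌋₊) : (d : ℝ) ≤ Real.exp (2 * y) := by
  have hlog4 : Real.log 4 ≤ 2 := by
    rw [Real.log_four_eq]
    linarith [Real.log_two_lt_d9]
  calc (d : ℝ) ≤ (4 : ℝ) ^ ⌊y⌋₊ :=
        mod_cast (Nat.le_of_dvd (primorial_pos _) hd).trans (primorial_le_four_pow _)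
    _ = Real.exp (⌊y⌋₊ * Real.log 4) := by rw [Real.exp_nat_mul, Real.exp_log four_pos]
    _ ≤ Real.exp (2 * y) := by
        rw [Real.exp_le_exp, mul_comm]
        exact mul_le_mul hlog4 (Nat.floor_le hy) (Nat.cast_nonneg _) zero_le_two

end Primorial

section ProgressionSieve

open Finset

/-- The sieve problem for the elements of a residue class `v` modulo `k` in `[a, b)`, weighted by
`f` and sifted by the primes dividing `P`. The level is `Q ^ 2`, so that the sieve moduli are the
`d ≤ Q`. -/
noncomputable def progressionSieve {f : ℕ → ℝ} {P Q : ℕ} (hf : ∀ i, 0 ≤ f i) (hP : Squarefree P)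
    (hQ : 1 ≤ Q) (a b k v : ℕ) : SelbergSieve where
  support := {i ∈ Ico a b | i ≡ v [MOD k]}
  prodPrimes := P
  prodPrimes_squarefree := hP
  weights := f
  weights_nonneg := hf
  totalMass := (∑ i ∈ Ico a b, f i) / k
  nu := ⟨fun d => (d : ℝ)⁻¹, by rw [Nat.cast_zero, inv_zero]⟩
  nu_mult := ArithmeticFunction.IsMultiplicative.iff_ne_zero.2
    ⟨by simp, fun {m n} _ _ _ => by simp [mul_comm]⟩
  nu_pos_of_prime p hp _ := inv_pos.2 (mod_cast hp.pos)
  nu_lt_one_of_prime p hp _ := inv_lt_one_of_one_lt₀ (mod_cast hp.one_lt)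
  level := (Q : ℝ) ^ 2
  one_le_level := one_le_pow₀ (mod_cast hQ)

variable {f : ℕ → ℝ} {a k P Q : ℕ} (hf : ∀ i, 0 ≤ f i) (hP : Squarefree P) (hQ : 1 ≤ Q)

theorem abs_rem_progressionSieve_le (hanti : AntitoneOn f (Set.Ici a)) (hk : 0 < k)
    (hkP : P.Coprime k) (b v : ℕ) {d : ℕ} (hd : d ∣ P) :
    |(progressionSieve hf hP hQ a b k v).rem d| ≤ f a := by
  have hd0 : 0 < d := Nat.pos_of_dvd_of_pos hd (Nat.pos_of_ne_zero hP.ne_zero)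
  obtain ⟨u, hu⟩ := filter_modEq_filter_dvd_eq (hkP.coprime_dvd_left hd) v (Ico a b)
  have hrem : (progressionSieve hf hP hQ a b k v).rem d =
      ∑ i ∈ Ico a b with i ≡ u [MOD k * d], f i - (∑ i ∈ Ico a b, f i) / (k * d : ℕ) := by
    rw [BoundingSieve.rem, BoundingSieve.multSum, ← hu, ← filter_filter, ← sum_filter]
    simp only [progressionSieve, ArithmeticFunction.coe_mk]
    rw [Nat.cast_mul, ← div_div, inv_mul_eq_div]
  rw [hrem]
  exact abs_sum_filter_Ico_modEq_sub_le hf hanti (Nat.mul_pos hk hd0) b u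

theorem sieveModuli_progressionSieve (a b k v : ℕ) :
    sieveModuli (progressionSieve hf hP hQ a b k v) = {d ∈ P.divisors | d ≤ Q} := by
  refine filter_congr fun d _ => ?_
  simp only [progressionSieve]
  exact_mod_cast Nat.pow_le_pow_iff_left two_ne_zero

theorem sum_inv_le_selbergBoundingSum_progressionSieve (a b k v : ℕ) :
    ∑ d ∈ P.divisors with d ≤ Q, (d : ℝ)⁻¹ ≤
      selbergBoundingSum (progressionSieve hf hP hQ a b k v) := by
  rw [selbergBoundingSum, sieveModuli_progressionSieve]
  exact sum_le_sum fun d hd =>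
    nu_le_selbergTerms (progressionSieve hf hP hQ a b k v).toBoundingSieve
      (Nat.dvd_of_mem_divisors (mem_of_mem_filter d hd))

theorem inv_selbergBoundingSum_progressionSieve_le (hk : k ≠ 0) (hkP : primorial Q ∣ k * P)
    (a b v : ℕ) :
    (selbergBoundingSum (progressionSieve hf hP hQ a b k v))⁻¹ ≤
      2 * sumInvDivisors k / Real.log (Q + 1) := by
  have hlog : 0 < Real.log (Q + 1) := Real.log_pos (mod_cast Nat.lt_add_of_pos_left hQ)
  rw [inv_eq_one_div, div_le_div_iff₀ (selbergBoundingSum_pos _) hlog, one_mul]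
  refine (log_add_one_le_mul_sum_inv hk hP.ne_zero hkP).trans ?_
  exact mul_le_mul_of_nonneg_left (sum_inv_le_selbergBoundingSum_progressionSieve hf hP hQ a b k v)
    (mul_nonneg zero_le_two (sumInvDivisors_nonneg k))

theorem sum_inv_nu_progressionSieve_le (a b k v : ℕ) :
    ∑ d ∈ sieveModuli (progressionSieve hf hP hQ a b k v),
      ((progressionSieve hf hP hQ a b k v).nu d)⁻¹ ≤ (Q : ℝ) ^ 2 := by
  have hsub : {d ∈ P.divisors | d ≤ Q} ⊆ Icc 1 Q := fun d hd =>
    mem_Icc.2 ⟨Nat.pos_of_mem_divisors (mem_of_mem_filter d hd), (mem_filter.1 hd).2⟩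
  rw [sieveModuli_progressionSieve]
  calc ∑ d ∈ P.divisors with d ≤ Q, ((d : ℝ)⁻¹)⁻¹
      ≤ ∑ d ∈ Icc 1 Q, ((d : ℝ)⁻¹)⁻¹ :=
        sum_le_sum_of_subset_of_nonneg hsub fun _ _ _ => by positivity
    _ ≤ ∑ _ ∈ Icc 1 Q, (Q : ℝ) := by
        refine sum_le_sum fun d hd => ?_
        rw [inv_inv]
        exact_mod_cast (mem_Icc.1 hd).2
    _ = (Q : ℝ) ^ 2 := by rw [sum_const, Nat.card_Icc, nsmul_eq_mul, Nat.add_sub_cancel, sq]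

theorem sum_primes_le_siftedSum_progressionSieve (ha : ∀ p, p.Prime → p ∣ P → p < a)
    (b v : ℕ) :
    ∑ p ∈ Ico a b with p.Prime ∧ p ≡ v [MOD k], f p ≤
      (progressionSieve hf hP hQ a b k v).siftedSum := by
  rw [BoundingSieve.siftedSum, ← sum_filter]
  refine sum_le_sum_of_subset_of_nonneg (fun p hp => ?_) fun i _ _ => hf i
  obtain ⟨hpab, hp', hpv⟩ := mem_filter.1 hp
  have hpP : P.Coprime p := (hp'.coprime_iff_not_dvd.2 fun hdvd =>
    (ha p hp' hdvd).not_ge (mem_Ico.1 hpab).1).symm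
  exact mem_filter.2 ⟨mem_filter.2 ⟨hpab, hpv⟩, hpP⟩

end ProgressionSieve

section BrunTitchmarsh

open Finset

theorem sum_primes_modEq_le {f : ℕ → ℝ} {a k Q : ℕ} (hf : ∀ i, 0 ≤ f i)
    (hanti : AntitoneOn f (Set.Ici a)) (hk : 0 < k) (hQ : 1 ≤ Q) (hQa : Q < a) (b v : ℕ) :
    ∑ p ∈ Ico a b with p.Prime ∧ p ≡ v [MOD k], f p ≤
      (∑ i ∈ Ico a b, f i) / k * (2 * sumInvDivisors k / Real.log (Q + 1)) + f a * Q ^ 4 := by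
  obtain ⟨P, hP, hPk, hPQ, hQkP⟩ := exists_squarefree_coprime_primorial_dvd_mul k Q
  set s := progressionSieve hf hP hQ a b k v
  have hsmall (p : ℕ) (hp : p.Prime) (hpP : p ∣ P) : p < a :=
    (hp.dvd_primorial_iff.1 (hpP.trans hPQ)).trans_lt hQa
  have hmass : 0 ≤ (∑ i ∈ Ico a b, f i) / k :=
    div_nonneg (sum_nonneg fun i _ => hf i) (Nat.cast_nonneg k)
  have herr : 0 ≤ ∑ d ∈ sieveModuli s, (s.nu d)⁻¹ := sum_nonneg fun d hd =>
    inv_nonneg.2 (BoundingSieve.nu_pos_of_dvd_prodPrimes (mem_sieveModuli.1 hd).1).le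
  calc ∑ p ∈ Ico a b with p.Prime ∧ p ≡ v [MOD k], f p
      ≤ s.siftedSum := sum_primes_le_siftedSum_progressionSieve hf hP hQ hsmall b v
    _ ≤ (∑ i ∈ Ico a b, f i) / k / selbergBoundingSum s +
          f a * (∑ d ∈ sieveModuli s, (s.nu d)⁻¹) ^ 2 :=
        siftedSum_le_selberg s fun d hd =>
          abs_rem_progressionSieve_le hf hP hQ hanti hk hPk b v hd
    _ ≤ (∑ i ∈ Ico a b, f i) / k * (2 * sumInvDivisors k / Real.log (Q + 1)) +
          f a * ((Q : ℝ) ^ 2) ^ 2 := by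
        rw [div_eq_mul_inv _ (selbergBoundingSum s)]
        gcongr
        · exact inv_selbergBoundingSum_progressionSieve_le hf hP hQ hk.ne' hQkP a b v
        · exact hf a
        · exact sum_inv_nu_progressionSieve_le hf hP hQ a b k v
    _ = _ := by rw [← pow_mul]

theorem sum_inv_Ico_le_one_add_log {a : ℕ} (ha : 0 < a) (b : ℕ) :
    ∑ i ∈ Ico a b, (i : ℝ)⁻¹ ≤ 1 + Real.log b := by
  calc ∑ i ∈ Ico a b, (i : ℝ)⁻¹ ≤ ∑ i ∈ Icc 1 b, (i : ℝ)⁻¹ := by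
        refine sum_le_sum_of_subset_of_nonneg (fun i hi => ?_) fun _ _ _ => by positivity
        rw [mem_Ico] at hi
        exact mem_Icc.2 ⟨ha.trans_le hi.1, hi.2.le⟩
    _ ≤ 1 + Real.log b := by simpa [harmonic_eq_sum_Icc] using harmonic_le_one_add_log b

theorem inv_ceil_mul_floor_rpow_pow_four_le {x : ℝ} {k : ℕ} (hx : 0 < x) (hk : 0 < k)
    (hkx : (k : ℝ) ≤ x ^ (1 / 2 : ℝ)) :
    (⌈x⌉₊ : ℝ)⁻¹ * (⌊x ^ (1 / 8 : ℝ)⌋₊ : ℝ) ^ 4 ≤ (k : ℝ)⁻¹ := by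
  have hfloor : (⌊x ^ (1 / 8 : ℝ)⌋₊ : ℝ) ^ 4 ≤ x ^ (1 / 2 : ℝ) := by
    calc (⌊x ^ (1 / 8 : ℝ)⌋₊ : ℝ) ^ 4 ≤ (x ^ (1 / 8 : ℝ)) ^ 4 := by
          gcongr
          exact Nat.floor_le (by positivity)
      _ = x ^ (1 / 2 : ℝ) := by
          rw [← Real.rpow_mul_natCast hx.le]
          norm_num
  rw [inv_mul_le_iff₀ (mod_cast Nat.ceil_pos.2 hx), ← div_eq_mul_inv,
    le_div_iff₀ (mod_cast hk)]
  calc (⌊x ^ (1 / 8 : ℝ)⌋₊ : ℝ) ^ 4 * k ≤ x ^ (1 / 2 : ℝ) * x ^ (1 / 2 : ℝ) := by gcongr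
    _ = x := by
        rw [← Real.rpow_add hx, add_halves, Real.rpow_one]
    _ ≤ ⌈x⌉₊ := Nat.le_ceil x

theorem sum_inv_primes_modEq_le {x : ℝ} {k : ℕ} (hx : 1 < x) (hk : 0 < k)
    (hkx : (k : ℝ) ≤ x ^ (1 / 2 : ℝ)) (b v : ℕ) :
    ∑ p ∈ Ico ⌈x⌉₊ b with p.Prime ∧ p ≡ v [MOD k], (p : ℝ)⁻¹ ≤
      16 * (1 + Real.log b) / Real.log x * (sumInvDivisors k / k) + (k : ℝ)⁻¹ := by
  have hx0 : 0 < x := one_pos.trans hx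
  have hlogx : 0 < Real.log x := Real.log_pos hx
  have hσ := sumInvDivisors_nonneg k
  have ha : 0 < ⌈x⌉₊ := Nat.ceil_pos.2 hx0
  -- The sieve error `Q⁴ / x` must stay below `1 / k` for every `k ≤ √x`.
  set Q := ⌊x ^ (1 / 8 : ℝ)⌋₊
  have hQ : 1 ≤ Q := (Nat.one_le_floor_iff _).2 (Real.one_le_rpow hx.le (by norm_num))
  have hQa : Q < ⌈x⌉₊ := Nat.lt_ceil.2 <| (Nat.floor_le (by positivity)).trans_lt
    (Real.rpow_lt_self_of_one_lt hx (by norm_num))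
  have hlogQ : Real.log x / 8 ≤ Real.log (Q + 1) := by
    rw [div_eq_inv_mul, ← one_div, ← Real.log_rpow hx0]
    exact Real.log_le_log (by positivity) (Nat.lt_floor_add_one _).le
  have hlogQ0 : 0 < Real.log (Q + 1) := (by positivity : 0 < Real.log x / 8).trans_le hlogQ
  have hanti : AntitoneOn (fun i : ℕ => (i : ℝ)⁻¹) (Set.Ici ⌈x⌉₊) := fun i hi j _ hij =>
    inv_anti₀ (mod_cast ha.trans_le hi) (mod_cast hij)
  calc ∑ p ∈ Ico ⌈x⌉₊ b with p.Prime ∧ p ≡ v [MOD k], (p : ℝ)⁻¹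
      ≤ (∑ i ∈ Ico ⌈x⌉₊ b, (i : ℝ)⁻¹) / k * (2 * sumInvDivisors k / Real.log (Q + 1)) +
          (⌈x⌉₊ : ℝ)⁻¹ * Q ^ 4 :=
        sum_primes_modEq_le (fun i => by positivity) hanti hk hQ hQa b v
    _ ≤ (1 + Real.log b) / k * (2 * sumInvDivisors k / (Real.log x / 8)) + (k : ℝ)⁻¹ := by
        gcongr
        · exact sum_inv_Ico_le_one_add_log ha b
        · exact inv_ceil_mul_floor_rpow_pow_four_le hx0 hk hkx
    _ = _ := by
        field_simp
        ring

theorem sum_inv_primes_modEq_le_mul_sumInvDivisors {δ : ℝ} {n d : ℕ} (hδ : 0 < δ)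
    (hn : 3 ≤ n) (hd : d ∣ primorial ⌊δ * Real.log n / 4⌋₊) (v : ℕ) :
    ∑ p ∈ Ico ⌈(n : ℝ) ^ δ⌉₊ n with p.Prime ∧ p ≡ v [MOD d], (p : ℝ)⁻¹ ≤
      (32 / δ + 1) * (sumInvDivisors d / d) := by
  have hn3 : (3 : ℝ) ≤ n := mod_cast hn
  have hlog : 1 ≤ Real.log n := by
    rw [Real.le_log_iff_exp_le (by linarith)]
    linarith [Real.exp_one_lt_d9]
  have hd0 : 0 < d := Nat.pos_of_dvd_of_pos hd (primorial_pos _)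
  -- This is what the cutoff `δ log n / 4` is chosen for.
  have hd_le : (d : ℝ) ≤ ((n : ℝ) ^ δ) ^ (1 / 2 : ℝ) := by
    refine (cast_le_exp_of_dvd_primorial (by positivity) hd).trans_eq ?_
    rw [← Real.rpow_mul (by positivity), Real.rpow_def_of_pos (by positivity)]
    ring_nf
  have hσ := one_le_sumInvDivisors hd0.ne'
  calc ∑ p ∈ Ico ⌈(n : ℝ) ^ δ⌉₊ n with p.Prime ∧ p ≡ v [MOD d], (p : ℝ)⁻¹
      ≤ 16 * (1 + Real.log n) / Real.log ((n : ℝ) ^ δ) * (sumInvDivisors d / d) + (d : ℝ)⁻¹ :=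
        sum_inv_primes_modEq_le (Real.one_lt_rpow (by linarith) hδ) hd0 hd_le n v
    _ ≤ 32 / δ * (sumInvDivisors d / d) + sumInvDivisors d / d := by
        rw [Real.log_rpow (by positivity)]
        refine add_le_add (mul_le_mul_of_nonneg_right ?_ (by positivity)) ?_
        · rw [div_le_div_iff₀ (by positivity) hδ]
          nlinarith
        · rw [← one_div]
          gcongr
    _ = _ := by ring

end BrunTitchmarsh

section SingularSeries

open Finset

theorem tprod_mem_Icc_zero_one {ι : Type*} {f : ι → ℝ} (hf : ∀ i, f i ∈ Set.Icc 0 1) :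
    ∏' i, f i ∈ Set.Icc 0 1 := by
  refine ⟨tprod_nonneg fun i => (hf i).1, ?_⟩
  by_cases hm : Multipliable f
  · exact le_of_tendsto' hm.hasProd fun s =>
      prod_le_one (fun i _ => (hf i).1) fun i _ => (hf i).2
  · exact (tprod_eq_one_of_not_multipliable hm).le

theorem one_sub_one_div_sub_one_sq_mem_Icc {x : ℝ} (hx : 2 ≤ x) :
    1 - 1 / (x - 1) ^ 2 ∈ Set.Icc 0 1 := by
  have h : 1 / (x - 1) ^ 2 ≤ 1 := (div_le_one₀ (by nlinarith)).2 (by nlinarith)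
  exact ⟨sub_nonneg.2 h, sub_le_self 1 (by positivity)⟩

theorem one_add_one_div_sub_one_sq_le {x : ℝ} (hx : 2 ≤ x) :
    (1 + 1 / (x - 1)) ^ 2 ≤ 1 + 6 / x := by
  have hx1 : 0 < x - 1 := by linarith
  have hsq : (1 + 1 / (x - 1)) ^ 2 = x ^ 2 / (x - 1) ^ 2 := by
    field_simp
    ring
  have hlin : 1 + 6 / x = (x + 6) / x := by field_simp
  rw [hsq, hlin, div_le_div_iff₀ (by positivity) (by positivity)]
  nlinarith [mul_nonneg (sub_nonneg.2 hx) (by positivity : 0 ≤ x)]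

theorem singularSeries_sq_le_prod_primeFactors (m : ℕ) :
    singularSeries m ^ 2 ≤ ∏ p ∈ m.primeFactors, (1 + 6 / (p : ℝ)) := by
  have htprod := tprod_mem_Icc_zero_one fun p : {p : ℕ // p.Prime ∧ ¬ p ∣ m} =>
    one_sub_one_div_sub_one_sq_mem_Icc (mod_cast p.2.1.two_le : (2 : ℝ) ≤ (p : ℕ))
  calc singularSeries m ^ 2
      ≤ 1 * (∏ p ∈ m.primeFactors, (1 + 1 / ((p : ℝ) - 1))) ^ 2 := by
        rw [singularSeries, mul_pow]
        gcongr
        exact pow_le_one₀ htprod.1 htprod.2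
    _ = ∏ p ∈ m.primeFactors, (1 + 1 / ((p : ℝ) - 1)) ^ 2 := by rw [one_mul, prod_pow]
    _ ≤ _ := prod_le_prod (fun p _ => sq_nonneg _) fun p hp =>
        one_add_one_div_sub_one_sq_le (mod_cast (Nat.prime_of_mem_primeFactors hp).two_le)

theorem card_primeFactors_mul_log_two_le (m : ℕ) :
    #m.primeFactors * Real.log 2 ≤ Real.log m := by
  obtain rfl | hm := eq_or_ne m 0
  · simp
  have h : 2 ^ #m.primeFactors ≤ m :=
    (pow_card_le_prod _ _ _ fun p hp => (Nat.prime_of_mem_primeFactors hp).two_le).trans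
      (Nat.le_of_dvd (Nat.pos_of_ne_zero hm) (Nat.prod_primeFactors_dvd m))
  rw [← Real.log_pow]
  exact Real.log_le_log (by positivity) (mod_cast h)

theorem prod_one_add_div_le_exp {s : Finset ℕ} {κ z : ℝ} (hκ : 0 ≤ κ) (hz : 0 < z)
    (hs : ∀ p ∈ s, z ≤ p) : ∏ p ∈ s, (1 + κ / p) ≤ Real.exp (#s * (κ / z)) := by
  refine (Real.prod_one_add_le_exp_sum s fun p => by positivity).trans (Real.exp_le_exp.2 ?_)
  rw [← nsmul_eq_mul]
  exact sum_le_card_nsmul _ _ _ fun p hp => div_le_div_of_nonneg_left hκ hz (hs p hp)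

theorem prod_primeFactors_one_add_div_le {m : ℕ} (hm : m ≠ 0) {κ z : ℝ} (hκ : 0 ≤ κ)
    (hz : 0 < z) :
    ∏ p ∈ m.primeFactors, (1 + κ / p) ≤ Real.exp (Real.log m / Real.log 2 * (κ / z)) *
      ∏ p ∈ (m.gcd (primorial ⌊z⌋₊)).primeFactors, (1 + κ / p) := by
  have hsmall : (m.gcd (primorial ⌊z⌋₊)).primeFactors =
      m.primeFactors.filter fun p : ℕ => (p : ℝ) ≤ z := by
    rw [Nat.primeFactors_gcd hm (primorial_ne_zero _), primeFactors_primorial]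
    ext p
    rw [mem_inter, mem_filter, Nat.mem_primesLE, Nat.le_floor_iff hz.le]
    exact and_congr_right fun hp => and_iff_left (Nat.prime_of_mem_primeFactors hp)
  have hlog2 : 0 < Real.log 2 := Real.log_pos one_lt_two
  have hlarge : ∏ p ∈ m.primeFactors.filter (fun p : ℕ => ¬ (p : ℝ) ≤ z), (1 + κ / (p : ℝ)) ≤
      Real.exp (Real.log m / Real.log 2 * (κ / z)) := by
    refine (prod_one_add_div_le_exp hκ hz fun p hp => (not_le.1 (mem_filter.1 hp).2).le).trans
      (Real.exp_le_exp.2 ?_)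
    gcongr
    rw [le_div_iff₀ hlog2]
    refine le_trans ?_ (card_primeFactors_mul_log_two_le m)
    gcongr
    exact filter_subset _ _
  rw [hsmall, ← prod_filter_not_mul_prod_filter m.primeFactors fun p : ℕ => (p : ℝ) ≤ z]
  gcongr

theorem singularSeries_sq_le_sum_divisors {m : ℕ} (hm : m ≠ 0) {z : ℝ} (hz : 0 < z) :
    singularSeries m ^ 2 ≤ Real.exp (Real.log m / Real.log 2 * (6 / z)) *
      ∑ d ∈ (primorial ⌊z⌋₊).divisors with d ∣ m, ∏ p ∈ d.primeFactors, 6 / (p : ℝ) := by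
  have hgcd : {d ∈ (primorial ⌊z⌋₊).divisors | d ∣ m} =
      (m.gcd (primorial ⌊z⌋₊)).divisors := by
    ext d
    rw [mem_filter, Nat.mem_divisors, Nat.mem_divisors, Nat.dvd_gcd_iff,
      and_iff_left (primorial_ne_zero _), and_iff_left (Nat.gcd_ne_zero_left hm), and_comm]
  have hsq : Squarefree (m.gcd (primorial ⌊z⌋₊)) :=
    (squarefree_primorial _).squarefree_of_dvd (Nat.gcd_dvd_right _ _)
  rw [hgcd, sum_divisors_prod_primeFactors hsq]
  exact (singularSeries_sq_le_prod_primeFactors m).trans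
    (prod_primeFactors_one_add_div_le hm (by norm_num) hz)

theorem singularSeries_sq_le_mul_sum_divisors {δ : ℝ} {m n : ℕ} (hδ : 0 < δ) (hm : m ≠ 0)
    (hmn : m ≤ n) (hn : 1 < n) :
    singularSeries m ^ 2 ≤ Real.exp (24 / (δ * Real.log 2)) *
      ∑ d ∈ (primorial ⌊δ * Real.log n / 4⌋₊).divisors with d ∣ m,
        ∏ p ∈ d.primeFactors, 6 / (p : ℝ) := by
  have hlog : 0 < Real.log n := Real.log_pos (mod_cast hn)
  have hlogm : Real.log m ≤ Real.log n :=
    Real.log_le_log (mod_cast Nat.pos_of_ne_zero hm) (mod_cast hmn)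
  refine (singularSeries_sq_le_sum_divisors hm (by positivity)).trans <|
    mul_le_mul_of_nonneg_right (Real.exp_le_exp.2 ?_) (sum_nonneg fun _ _ => by positivity)
  calc Real.log m / Real.log 2 * (6 / (δ * Real.log n / 4))
      ≤ Real.log n / Real.log 2 * (6 / (δ * Real.log n / 4)) := by gcongr
    _ = 24 / (δ * Real.log 2) := by
        field_simp
        norm_num

end SingularSeries

section Averaging

open Finset

theorem sum_primes_sum_filter_dvd_sub_div (D : Finset ℕ) (h : ℕ → ℝ) (a n : ℕ) :
    ∑ i ∈ Ico a n with i.Prime, (∑ d ∈ D with d ∣ n - i, h d) / (i : ℝ) =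
      ∑ d ∈ D, h d * ∑ i ∈ Ico a n with i.Prime ∧ i ≡ n [MOD d], (i : ℝ)⁻¹ := by
  simp_rw [sum_div, mul_sum, div_eq_mul_inv]
  refine sum_comm' fun i d => ?_
  simp only [mem_filter, mem_Ico]
  constructor
  · rintro ⟨⟨hi, hip⟩, hd, hdvd⟩
    exact ⟨⟨hi, hip, (Nat.modEq_iff_dvd' hi.2.le).2 hdvd⟩, hd⟩
  · rintro ⟨⟨hi, hip, hmod⟩, hd⟩
    exact ⟨⟨hi, hip⟩, hd, (Nat.modEq_iff_dvd' hi.2.le).1 hmod⟩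

theorem sum_singularSeries_sq_div_prime_bounded_general {δ : ℝ} (hδ : 0 < δ) :
    ∃ (C : ℝ) (n₀ : ℕ), 0 < C ∧ ∀ n : ℕ, n₀ ≤ n →
      ∑ i ∈ Ico ⌈(n : ℝ) ^ δ⌉₊ n with i.Prime, singularSeries (n - i) ^ 2 / (i : ℝ) ≤ C := by
  set K := Real.exp (24 / (δ * Real.log 2))
  refine ⟨K * ((32 / δ + 1) * Real.exp (4 * 6)), 3, by positivity, fun n hn => ?_⟩
  set D := (primorial ⌊δ * Real.log n / 4⌋₊).divisors
  let h (d : ℕ) : ℝ := ∏ p ∈ d.primeFactors, 6 / (p : ℝ)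
  have hterm (i : ℕ) (hi : i ∈ {i ∈ Ico ⌈(n : ℝ) ^ δ⌉₊ n | i.Prime}) :
      singularSeries (n - i) ^ 2 / (i : ℝ) ≤ K * ((∑ d ∈ D with d ∣ n - i, h d) / i) := by
    have hin : i < n := (mem_Ico.1 (mem_filter.1 hi).1).2
    rw [← mul_div_assoc]
    gcongr
    exact singularSeries_sq_le_mul_sum_divisors hδ (Nat.sub_ne_zero_of_lt hin) (Nat.sub_le n i)
      (by lia)
  calc ∑ i ∈ Ico ⌈(n : ℝ) ^ δ⌉₊ n with i.Prime, singularSeries (n - i) ^ 2 / (i : ℝ)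
      ≤ K * ∑ d ∈ D, h d * ∑ i ∈ Ico ⌈(n : ℝ) ^ δ⌉₊ n with i.Prime ∧ i ≡ n [MOD d], (i : ℝ)⁻¹ := by
        rw [← sum_primes_sum_filter_dvd_sub_div, mul_sum]
        exact sum_le_sum hterm
    _ ≤ K * ∑ d ∈ D, h d * ((32 / δ + 1) * (sumInvDivisors d / d)) := by
        refine mul_le_mul_of_nonneg_left (sum_le_sum fun d hd => ?_) (Real.exp_pos _).le
        exact mul_le_mul_of_nonneg_left (sum_inv_primes_modEq_le_mul_sumInvDivisors hδ hn
          (Nat.dvd_of_mem_divisors hd) n) (by positivity)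
    _ = K * ((32 / δ + 1) * ∑ d ∈ D, h d * (sumInvDivisors d / d)) := by
        simp_rw [mul_left_comm (h _), ← mul_sum]
    _ ≤ K * ((32 / δ + 1) * Real.exp (4 * 6)) := by
        gcongr
        exact sum_divisors_prod_mul_sumInvDivisors_div_le (squarefree_primorial _) (by norm_num)

theorem filter_prime_rpow_le_subset_filter_Ico (n : ℕ) (δ η : ℝ) :
    (range (n + 1)).filter (fun i => Nat.Prime i ∧ (n : ℝ) ^ δ ≤ (i : ℝ) ∧
      (i : ℝ) ≤ (n : ℝ) - (n : ℝ) ^ η) ⊆ {i ∈ Ico ⌈(n : ℝ) ^ δ⌉₊ n | i.Prime} := by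
  intro i hi
  obtain ⟨hin, hip, hlow, hhigh⟩ := mem_filter.1 hi
  have hn : 0 < n := hip.pos.trans_le (Nat.lt_succ_iff.1 (mem_range.1 hin))
  have hpos : 0 < (n : ℝ) ^ η := by positivity
  have hlt : (i : ℝ) < n := by linarith
  exact mem_filter.2 ⟨mem_Ico.2 ⟨Nat.ceil_le.2 hlow, mod_cast hlt⟩, hip⟩

end Averaging

/-- For every `ε ∈ (0, 1/4)` there are `C > 0` and `n₀` such that for all `n ≥ n₀`,
with `M = n^{1-2ε}`, one has `∑_{i prime, M ≤ i ≤ n - n^{1-ε}} C(n-i)²/i ≤ C`. -/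
theorem sum_singularSeries_sq_div_prime_bounded
    (ε : ℝ) (hε0 : 0 < ε) (hε1 : ε < 1 / 4) :
    ∃ (C : ℝ) (n₀ : ℕ), 0 < C ∧ ∀ n : ℕ, n₀ ≤ n →
      ∑ i ∈ (Finset.range (n + 1)).filter
          (fun i => Nat.Prime i ∧ (n : ℝ) ^ (1 - 2 * ε) ≤ (i : ℝ) ∧
            (i : ℝ) ≤ (n : ℝ) - (n : ℝ) ^ (1 - ε)),
        singularSeries (n - i) ^ 2 / (i : ℝ) ≤ C := by
  obtain ⟨C, n₀, hC, h⟩ :=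
    sum_singularSeries_sq_div_prime_bounded_general (δ := 1 - 2 * ε) (by linarith)
  exact ⟨C, n₀, hC, fun n hn => (Finset.sum_le_sum_of_subset_of_nonneg
    (filter_prime_rpow_le_subset_filter_Ico n _ _) fun _ _ _ => by positivity).trans (h n hn)⟩
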